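/- Let k, l ≥ 2 be multiplicatively independent integers. Let a be a k-automatic sequence produced by a k-automaton 𝒜 and b an l-automatic sequence produced by an l-automaton ℬ, where 𝒜 and ℬ are idempotent, ignore the leading 0's, and have all states accessible. Let C be a strongly connected component of 𝒜 and D a strongly connected component of ℬ. Then there exist states s ∈ C and r ∈ D such that, setting ã(m) = τ(δ*(s, (m)_k)) and b̃(m) = τ′(δ′*(r, (m)_l)), for every integer m ≥ 0 the set Z_m = { n ∈ ℕ : a(n+i) = ã(i) and b(n+i) = b̃(i) for all 0 ≤ i < m } has positive upper density. -/

import Mathlib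

open Filter

/-- The upper density of a set of natural numbers:
`limsup_{n → ∞} |A ∩ [0,n)| / n`. -/
noncomputable def upperDensity (A : Set ℕ) : ℝ :=
  limsup (fun n : ℕ => (Nat.card ↥(A ∩ Set.Iio n) : ℝ) / n) atTop

/-- The base-`k` representation of `n` as a word over `Σ_k = Fin k`, read starting
from the leading digit, with no leading zeros (junk value `[]` if `k ≤ 1`;
the representation of `0` is the empty word). -/
def kRepr (k n : ℕ) : List (Fin k) :=
  if h : 1 < k then
    (Nat.digits k n).reverse.pmap (fun d hd => (⟨d, hd⟩ : Fin k))
      (fun d hd => Nat.digits_lt_base h (List.mem_reverse.mp hd))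
  else []

/-- Run a deterministic automaton with transition function `δ` from the state `s`
on the word `w`, reading `w` from the left: the extended transition function `δ*`. -/
def run {S : Type*} {k : ℕ} (δ : S → Fin k → S) (s : S) (w : List (Fin k)) : S :=
  w.foldl δ s

/-- A sequence `a : ℕ → Ω` is `k`-automatic if it is produced by a deterministic
finite automaton with output, reading the base-`k` representation of the input
starting from the leading digit. -/
def IsAutomatic {Ω : Type*} (k : ℕ) (a : ℕ → Ω) : Prop :=
  ∃ (S : Type) (_ : Fintype S) (δ : S → Fin k → S) (s₀ : S) (τ : S → Ω),
    ∀ n : ℕ, a n = τ (run δ s₀ (kRepr k n))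

/-- Two integers are multiplicatively independent if no nontrivial powers of them
coincide (equivalently, they are not both powers of a common integer). -/
def MultIndep (k l : ℕ) : Prop :=
  ∀ i j : ℕ, k ^ i = l ^ j → i = 0 ∧ j = 0

/-- The finite word `w` occurs in the sequence `a` at position `i`. -/
def OccursAt {Ω : Type*} (a : ℕ → Ω) (w : List Ω) (i : ℕ) : Prop :=
  ∀ (j : ℕ) (h : j < w.length), w.get ⟨j, h⟩ = a (i + j)

/-- The finite word `w` is a factor of the sequence `a`. -/
def IsFactor {Ω : Type*} (a : ℕ → Ω) (w : List Ω) : Prop :=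
  ∃ i : ℕ, OccursAt a w i

/-- A sequence is uniformly recurrent if each of its factors occurs in it with
bounded gaps. -/
def UniformlyRecurrent {Ω : Type*} (a : ℕ → Ω) : Prop :=
  ∀ w : List Ω, IsFactor a w →
    ∃ C : ℕ, ∀ N : ℕ, ∃ i : ℕ, N ≤ i ∧ i ≤ N + C ∧ OccursAt a w i

/-- A strongly connected component of an automaton: a nonempty set of states closed
under all transitions and such that each of its states can be reached from each
other one by some word. -/
def IsSCC {S : Type*} {k : ℕ} (δ : S → Fin k → S) (C : Set S) : Prop :=
  C.Nonempty ∧ (∀ s ∈ C, ∀ u : Fin k, δ s u ∈ C) ∧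
    ∀ s ∈ C, ∀ s' ∈ C, ∃ w : List (Fin k), run δ s w = s'

/-!
If `n` is divisible by `k ^ (j + 1)`, then adding `i < k ^ j` to `n` replaces a block of trailing
zeros of `(n)_k` by `(i)_k` preceded by at least one `0`; an idempotent automaton cannot see how
many zeros were read, so it restarts on `i` from the state reached on `n`.

Choose `u, v > 0` whose expansions lead into `C` and `D`. Since `log k / log l` is irrational, the
ratios `k ^ α / l ^ β` are dense in `(0, ∞)`, and so, for arbitrarily large `α`, an initial segment
`[X, (1 + ε) X)` of the integers with leading base-`k` digits `(u)_k` consists of integers with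
leading base-`l` digits `(v)_l`. The multiples of `(k l) ^ (m + 1)` in these segments have positive
upper density and lead into `C × D`. By subadditivity some pair `(s, r)` is reached with positive
upper density; the sets `Z_m` decrease with `m`, so one of the finitely many pairs serves for all
`m`.
-/

section Expansion

variable {k : ℕ}

lemma map_val_kRepr (hk : 1 < k) (n : ℕ) :
    (kRepr k n).map Fin.val = (Nat.digits k n).reverse := by
  simp [kRepr, hk, List.map_pmap]

lemma kRepr_zero : kRepr k 0 = [] := by
  simp [kRepr]

lemma length_kRepr (hk : 1 < k) (n : ℕ) : (kRepr k n).length = (Nat.digits k n).length := by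
  simpa using congrArg List.length (map_val_kRepr hk n)

lemma length_kRepr_le {i j : ℕ} (hk : 1 < k) (hi : i < k ^ j) : (kRepr k i).length ≤ j :=
  length_kRepr hk i ▸ (Nat.digits_length_le_iff hk i).mpr hi

lemma kRepr_mul_add (hk : 1 < k) {x : ℕ} {d : Fin k} (h : x ≠ 0 ∨ (d : ℕ) ≠ 0) :
    kRepr k (k * x + d) = kRepr k x ++ [d] := by
  apply Fin.val_injective.list_map
  rw [List.map_append, map_val_kRepr hk, map_val_kRepr hk, add_comm,
    Nat.digits_add k hk d x d.isLt h.symm, List.reverse_cons, List.map_singleton]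

lemma kRepr_pow_mul_add (hk : 1 < k) {z : Fin k} (hz : (z : ℕ) = 0) {x i j : ℕ} (hx : 0 < x)
    (hi : i < k ^ j) :
    kRepr k (k ^ j * x + i) =
      kRepr k x ++ List.replicate (j - (kRepr k i).length) z ++ kRepr k i := by
  have hj : j = (Nat.digits k i).length + (j - (kRepr k i).length) := by
    rw [← length_kRepr hk, Nat.add_sub_cancel' (length_kRepr_le hk hi)]
  apply Fin.val_injective.list_map
  simp only [List.map_append, List.map_replicate, map_val_kRepr hk, hz]
  conv_lhs => rw [hj, add_comm, ← Nat.digits_append_zeroes_append_digits hk hx]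
  simp

lemma kRepr_prefix_of_mem_Ico (hk : 1 < k) {u j n : ℕ} (hu : 0 < u)
    (hn : n ∈ Set.Ico (k ^ j * u) (k ^ j * (u + 1))) : kRepr k u <+: kRepr k n := by
  obtain ⟨i, rfl⟩ := Nat.exists_eq_add_of_le hn.1
  have hi : i < k ^ j := by simpa [mul_add] using hn.2
  rw [kRepr_pow_mul_add hk (z := ⟨0, by lia⟩) rfl hu hi, List.append_assoc]
  exact List.prefix_append _ _

lemma pos_of_kRepr_prefix (hk : 1 < k) {u n : ℕ} (hu : 0 < u) (h : kRepr k u <+: kRepr k n) :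
    0 < n := by
  by_contra! hn
  obtain rfl : n = 0 := by lia
  rw [kRepr_zero, List.prefix_nil] at h
  have hdigits : Nat.digits k u = [] := by simpa [h] using (map_val_kRepr hk u).symm
  exact hu.ne' (Nat.digits_eq_nil_iff_eq_zero.mp hdigits)

end Expansion

section Automaton

variable {S : Type*} {k : ℕ} {δ : S → Fin k → S}

lemma run_append (s : S) (v w : List (Fin k)) : run δ s (v ++ w) = run δ (run δ s v) w :=
  List.foldl_append

lemma run_mem {C : Set S} (hC : ∀ t ∈ C, ∀ d, δ t d ∈ C) {s : S} (hs : s ∈ C)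
    (w : List (Fin k)) : run δ s w ∈ C := by
  induction w generalizing s with
  | nil => exact hs
  | cons d _ ih => exact ih (hC s hs d)

lemma run_mem_of_prefix {C : Set S} (hC : ∀ t ∈ C, ∀ d, δ t d ∈ C) {s : S} {v w : List (Fin k)}
    (hv : run δ s v ∈ C) (hvw : v <+: w) : run δ s w ∈ C := by
  obtain ⟨v', rfl⟩ := hvw
  rw [run_append]
  exact run_mem hC hv v'

lemma run_replicate_succ {s : S} {z : Fin k} (hidem : δ (δ s z) z = δ s z) (j : ℕ) :
    run δ s (List.replicate (j + 1) z) = δ s z := by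
  induction j with
  | zero => rfl
  | succ j ih => rw [List.replicate_succ', run_append, ih]; exact hidem

lemma run_kRepr_add_of_dvd (hk : 1 < k) {z : Fin k} (hz : (z : ℕ) = 0)
    (hidem : ∀ t, δ (δ t z) z = δ t z) (s : S) {n i j : ℕ} (hn : 0 < n)
    (hdvd : k ^ (j + 1) ∣ n) (hi : i < k ^ j) :
    run δ s (kRepr k (n + i)) = run δ (run δ s (kRepr k n)) (kRepr k i) := by
  obtain ⟨x, rfl⟩ := hdvd
  have hx : 0 < x := Nat.pos_of_mul_pos_left hn
  have restart {i : ℕ} (hi : i < k ^ j) : run δ s (kRepr k (k ^ (j + 1) * x + i)) =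
      run δ (δ (run δ s (kRepr k x)) z) (kRepr k i) := by
    rw [kRepr_pow_mul_add hk hz hx (hi.trans (Nat.pow_lt_pow_succ hk)),
      Nat.succ_sub (length_kRepr_le hk hi), run_append, run_append, run_replicate_succ (hidem _)]
  have restart_zero := restart (i := 0) (by positivity)
  rw [add_zero, kRepr_zero] at restart_zero
  rw [restart hi, restart_zero]
  rfl

lemma exists_run_kRepr_eq (hk : 1 < k) {z : Fin k} (hz : (z : ℕ) = 0) {s : S}
    (hs : δ s z = s) (w : List (Fin k)) : ∃ n, run δ s (kRepr k n) = run δ s w := by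
  induction w using List.reverseRecOn with
  | nil => exact ⟨0, by rw [kRepr_zero]⟩
  | append_singleton w d ih =>
    obtain ⟨n, hn⟩ := ih
    by_cases h : n ≠ 0 ∨ (d : ℕ) ≠ 0
    · exact ⟨k * n + d, by rw [kRepr_mul_add hk h, run_append, run_append, hn]⟩
    · obtain ⟨rfl, hd⟩ : n = 0 ∧ (d : ℕ) = 0 := by simpa using h
      obtain rfl : d = z := Fin.ext (hd.trans hz.symm)
      refine ⟨0, ?_⟩
      rw [run_append, ← hn, kRepr_zero]
      exact hs.symm

lemma IsSCC.exists_run_kRepr_mem {C : Set S} (hC : IsSCC δ C) (hk : 1 < k) {z : Fin k}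
    (hz : (z : ℕ) = 0) {s : S} (hs : δ s z = s) (hacc : ∀ t, ∃ w, run δ s w = t) :
    ∃ n, run δ s (kRepr k n) ∈ C := by
  obtain ⟨t, ht⟩ := hC.1
  obtain ⟨w, rfl⟩ := hacc t
  obtain ⟨n, hn⟩ := exists_run_kRepr_eq hk hz hs w
  exact ⟨n, hn ▸ ht⟩

lemma exists_pos_run_kRepr_mem (hk : 1 < k) {C : Set S} (hC : ∀ t ∈ C, ∀ d, δ t d ∈ C) {s : S}
    (h : ∃ n, run δ s (kRepr k n) ∈ C) : ∃ n, 0 < n ∧ run δ s (kRepr k n) ∈ C := by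
  obtain ⟨n, hn⟩ := h
  refine ⟨k * n + (⟨1, hk⟩ : Fin k), by simp, ?_⟩
  rw [kRepr_mul_add hk (.inr one_ne_zero), run_append]
  exact hC _ hn _

end Automaton

section Density

variable {A B : Set ℕ}

/-- The proportion of the integers in `[0, n)` that lie in `A`, so that `upperDensity A` is the
limsup of `initialDensity A`. As `0 / 0 = 0`, it vanishes at `n = 0`. -/
noncomputable def initialDensity (A : Set ℕ) (n : ℕ) : ℝ :=
  (Nat.card ↥(A ∩ Set.Iio n) : ℝ) / n

lemma initialDensity_mono (h : A ⊆ B) (n : ℕ) : initialDensity A n ≤ initialDensity B n := by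
  unfold initialDensity
  gcongr
  exact Nat.card_mono ((Set.finite_Iio n).inter_of_right B) (Set.inter_subset_inter_left _ h)

lemma initialDensity_union_le (A B : Set ℕ) (n : ℕ) :
    initialDensity (A ∪ B) n ≤ initialDensity A n + initialDensity B n := by
  rw [initialDensity, initialDensity, initialDensity, ← add_div, Set.union_inter_distrib_right]
  gcongr
  exact_mod_cast Set.ncard_union_le _ _

lemma initialDensity_nonneg (A : Set ℕ) (n : ℕ) : 0 ≤ initialDensity A n := by
  unfold initialDensity
  positivity

lemma initialDensity_le_one (A : Set ℕ) (n : ℕ) : initialDensity A n ≤ 1 := by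
  refine div_le_one_of_le₀ ?_ n.cast_nonneg
  have := Nat.card_mono (Set.finite_Iio n) (Set.inter_subset_right (s := A))
  simpa using this

lemma isBoundedUnder_le_initialDensity (A : Set ℕ) :
    IsBoundedUnder (· ≤ ·) atTop (initialDensity A) :=
  isBoundedUnder_of ⟨1, initialDensity_le_one A⟩

lemma isBoundedUnder_ge_initialDensity (A : Set ℕ) :
    IsBoundedUnder (· ≥ ·) atTop (initialDensity A) :=
  isBoundedUnder_of ⟨0, initialDensity_nonneg A⟩

lemma upperDensity_mono (h : A ⊆ B) : upperDensity A ≤ upperDensity B :=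
  limsup_le_limsup (.of_forall (initialDensity_mono h))
    (isBoundedUnder_ge_initialDensity A).isCoboundedUnder_le (isBoundedUnder_le_initialDensity B)

lemma upperDensity_empty : upperDensity ∅ = 0 := by
  simp [upperDensity]

lemma upperDensity_union_le (A B : Set ℕ) :
    upperDensity (A ∪ B) ≤ upperDensity A + upperDensity B := by
  have hA := isBoundedUnder_le_initialDensity A
  have hB := isBoundedUnder_le_initialDensity B
  have hA' := isBoundedUnder_ge_initialDensity A
  have hB' := (isBoundedUnder_ge_initialDensity B).isCoboundedUnder_le
  exact (limsup_le_limsup (.of_forall (initialDensity_union_le A B))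
    (isBoundedUnder_ge_initialDensity _).isCoboundedUnder_le (isBoundedUnder_le_add hA hB)).trans
    (limsup_add_le hA' hA hB' hB)

lemma upperDensity_biUnion_le {ι : Type*} (s : Finset ι) (B : ι → Set ℕ) :
    upperDensity (⋃ i ∈ s, B i) ≤ ∑ i ∈ s, upperDensity (B i) := by
  classical
  induction s using Finset.induction_on with
  | empty => simp [upperDensity_empty]
  | insert i s hi ih =>
    rw [Finset.set_biUnion_insert, Finset.sum_insert hi]
    exact (upperDensity_union_le _ _).trans (by gcongr)

lemma exists_upperDensity_pos_of_subset_iUnion {ι : Type*} [Finite ι] {B : ι → Set ℕ}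
    (hA : 0 < upperDensity A) (hAB : A ⊆ ⋃ i, B i) : ∃ i, 0 < upperDensity (B i) := by
  have := Fintype.ofFinite ι
  have hsum : ∑ _i : ι, (0 : ℝ) < ∑ i, upperDensity (B i) := by
    rw [Finset.sum_const_zero]
    exact hA.trans_le ((upperDensity_mono (by simpa using hAB)).trans
      (upperDensity_biUnion_le Finset.univ B))
  obtain ⟨i, -, hi⟩ := Finset.exists_lt_of_sum_lt hsum
  exact ⟨i, hi⟩

lemma le_upperDensity_of_frequently {c : ℝ}
    (h : ∃ᶠ n : ℕ in atTop, c * n ≤ Nat.card ↥(A ∩ Set.Iio n)) : c ≤ upperDensity A := by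
  refine le_limsup_of_frequently_le ?_ (isBoundedUnder_le_initialDensity A)
  refine (h.and_eventually (eventually_gt_atTop 0)).mono fun n ⟨hn, hpos⟩ => ?_
  exact (le_div_iff₀ (by exact_mod_cast hpos)).mpr hn

lemma sub_div_sub_one_le_card_dvd_inter_Ico {M : ℕ} (hM : 0 < M) (X Y : ℕ) :
    ((Y : ℝ) - X) / M - 1 ≤ Nat.card ↥({n | M ∣ n} ∩ Set.Ico X Y) := by
  have hcard : (Nat.card ↥({n | M ∣ n} ∩ Set.Ico X Y) : ℤ) =
      max (⌈(Y : ℚ) / M⌉ - ⌈(X : ℚ) / M⌉) 0 := by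
    have hset : {n | M ∣ n} ∩ Set.Ico X Y = ↑{n ∈ Finset.Ico X Y | n ≡ 0 [MOD M]} := by
      ext n
      simp [Nat.modEq_zero_iff_dvd, and_comm]
    rw [hset, Nat.card_coe_set_eq, Set.ncard_coe_finset]
    simpa using Nat.Ico_filter_modEq_card (r := M) X Y hM 0
  have hceil : (Y : ℚ) / M - (X / M + 1) ≤ (⌈(Y : ℚ) / M⌉ - ⌈(X : ℚ) / M⌉ : ℤ) := by
    push_cast
    linarith [Int.le_ceil ((Y : ℚ) / M), Int.ceil_lt_add_one ((X : ℚ) / M)]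
  have hle : ((Y : ℚ) - X) / M - 1 ≤ Nat.card ↥({n | M ∣ n} ∩ Set.Ico X Y) := by
    calc ((Y : ℚ) - X) / M - 1 = Y / M - (X / M + 1) := by ring
      _ ≤ _ := hceil
      _ ≤ _ := by exact_mod_cast hcard ▸ le_max_left _ _
  exact_mod_cast hle

lemma upperDensity_dvd_inter_pos {ε : ℝ} (hε : 0 < ε)
    (hA : ∃ᶠ X : ℕ in atTop, Set.Ico X ⌈(1 + ε) * X⌉₊ ⊆ A) {M : ℕ} (hM : 0 < M) :
    0 < upperDensity ({n | M ∣ n} ∩ A) := by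
  have hc : 0 < ε / (2 * M * (2 + ε)) := by positivity
  refine hc.trans_le (le_upperDensity_of_frequently ?_)
  have hY : Tendsto (fun X : ℕ => ⌈(1 + ε) * X⌉₊) atTop atTop :=
    tendsto_nat_ceil_atTop.comp (tendsto_natCast_atTop_atTop.const_mul_atTop (by positivity))
  refine hY.frequently ((hA.and_eventually
    (tendsto_natCast_atTop_atTop.eventually_ge_atTop (max 1 (2 * M / ε)))).mono ?_)
  rintro X ⟨hXA, hX⟩
  set Y := ⌈(1 + ε) * X⌉₊
  have hX₁ : (1 : ℝ) ≤ X := (le_max_left _ _).trans hX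
  have hX₂ : 2 * M ≤ X * ε := (div_le_iff₀ hε).mp ((le_max_right _ _).trans hX)
  have hY_ge : (1 + ε) * X ≤ Y := Nat.le_ceil _
  have hY_le : (Y : ℝ) ≤ (2 + ε) * X := by
    have := Nat.ceil_lt_add_one (a := (1 + ε) * X) (by positivity)
    linarith
  calc ε / (2 * M * (2 + ε)) * Y ≤ ε / (2 * M * (2 + ε)) * ((2 + ε) * X) := by gcongr
    _ = ε * X / M - ε * X / (2 * M) := by field_simp; ring
    _ ≤ ε * X / M - 1 := by
      gcongr
      rw [one_le_div (by positivity)]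
      linarith
    _ ≤ (Y - X) / M - 1 := by gcongr; linarith
    _ ≤ Nat.card ↥({n | M ∣ n} ∩ Set.Ico X Y) := sub_div_sub_one_le_card_dvd_inter_Ico hM X Y
    _ ≤ Nat.card ↥({n | M ∣ n} ∩ A ∩ Set.Iio Y) := by
      have hsub : {n | M ∣ n} ∩ Set.Ico X Y ⊆ {n | M ∣ n} ∩ A ∩ Set.Iio Y :=
        fun n hn => ⟨⟨hn.1, hXA hn.2⟩, hn.2.2⟩
      exact_mod_cast Nat.card_mono ((Set.finite_Iio Y).inter_of_right _) hsub

end Density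

section LeadingDigits

lemma exists_mul_sub_mul_mem_Ioo_of_irrational {a b x y : ℝ} (hb : 0 < b)
    (hab : Irrational (a / b)) (hxy : x < y) : ∃ (m : ℕ) (n : ℤ), m * a - n * b ∈ Set.Ioo x y := by
  have : Fact (0 < b) := ⟨hb⟩
  have hopen : IsOpen ((QuotientAddGroup.mk : ℝ → AddCircle b) '' Set.Ioo x y) :=
    QuotientAddGroup.isOpenMap_coe _ isOpen_Ioo
  have hdense : DenseRange (· • (a : AddCircle b) : ℕ → AddCircle b) :=
    denseRange_zsmul_iff_nsmul.mp (AddCircle.denseRange_zsmul_coe_iff.mpr hab)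
  obtain ⟨m, t, ht, hmt⟩ := hdense.exists_mem_open hopen ((Set.nonempty_Ioo.mpr hxy).image _)
  obtain ⟨n, hn⟩ : ∃ n : ℤ, n • b = m * a - t := by
    rw [← AddCircle.coe_eq_zero_iff, AddCircle.coe_sub, sub_eq_zero, ← nsmul_eq_mul]
    exact hmt.symm
  refine ⟨m, n, ?_⟩
  rwa [← zsmul_eq_mul, hn, sub_sub_cancel]

lemma frequently_exists_mul_sub_mul_mem_Ioo {a b x y : ℝ} (ha : 0 < a) (hb : 0 < b)
    (hab : Irrational (a / b)) (hxy : x < y) :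
    ∃ᶠ m : ℕ in atTop, ∃ n : ℕ, m * a - n * b ∈ Set.Ioo x y := by
  refine frequently_atTop.mpr fun N => ?_
  obtain ⟨M, hNM, hM⟩ : ∃ M ≥ N, y ≤ M * a :=
    ((eventually_ge_atTop N).and
      ((tendsto_natCast_atTop_atTop.atTop_mul_const ha).eventually_ge_atTop y)).exists
  obtain ⟨m, n, hx, hy⟩ := exists_mul_sub_mul_mem_Ioo_of_irrational hb hab
    (sub_lt_sub_right hxy (M * a))
  have hn : 0 ≤ n := by
    have hma : 0 ≤ m * a := by positivity
    have hnb : 0 < n * b := by linarith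
    exact_mod_cast (pos_of_mul_pos_left hnb hb.le).le
  lift n to ℕ using hn
  refine ⟨m + M, by lia, n, ?_⟩
  push_cast at hx hy ⊢
  constructor <;> linarith

lemma MultIndep.irrational_log_div_log {k l : ℕ} (hk : 1 < k) (hl : 1 < l)
    (h : MultIndep k l) : Irrational (Real.log k / Real.log l) := by
  rintro ⟨q, hq⟩
  have hlogk : 0 < Real.log k := Real.log_pos (by exact_mod_cast hk)
  have hlogl : 0 < Real.log l := Real.log_pos (by exact_mod_cast hl)
  have hq_pos : 0 < q := by
    have : (0 : ℝ) < q := hq ▸ div_pos hlogk hlogl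
    exact_mod_cast this
  obtain ⟨p, hp⟩ := Int.eq_ofNat_of_zero_le (Rat.num_pos.mpr hq_pos).le
  have hden : (q.den : ℝ) ≠ 0 := by exact_mod_cast q.den_nz
  rw [Rat.cast_def, hp, Int.cast_natCast, div_eq_div_iff hden hlogl.ne'] at hq
  have hlog : Real.log ((k : ℝ) ^ q.den) = Real.log ((l : ℝ) ^ p) := by
    rw [Real.log_pow, Real.log_pow]
    linarith
  have hpow : (k : ℝ) ^ q.den = (l : ℝ) ^ p :=
    Real.log_injOn_pos (Set.mem_Ioi.mpr (by positivity)) (Set.mem_Ioi.mpr (by positivity)) hlog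
  exact q.den_nz (h _ _ (by exact_mod_cast hpow)).1

lemma MultIndep.frequently_exists_pow_div_pow_mem_Ioo {k l : ℕ} (hk : 1 < k) (hl : 1 < l)
    (h : MultIndep k l) {x y : ℝ} (hx : 0 < x) (hxy : x < y) :
    ∃ᶠ α : ℕ in atTop, ∃ β : ℕ, (k : ℝ) ^ α / (l : ℝ) ^ β ∈ Set.Ioo x y := by
  have hk' : (1 : ℝ) < k := by exact_mod_cast hk
  have hl' : (1 : ℝ) < l := by exact_mod_cast hl
  refine (frequently_exists_mul_sub_mul_mem_Ioo (Real.log_pos hk') (Real.log_pos hl')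
    (h.irrational_log_div_log hk hl) (Real.log_lt_log hx hxy)).mono ?_
  rintro α ⟨β, hαβ⟩
  have hpos : 0 < (k : ℝ) ^ α / (l : ℝ) ^ β := by positivity
  have hlog : Real.log ((k : ℝ) ^ α / (l : ℝ) ^ β) = α * Real.log k - β * Real.log l := by
    rw [Real.log_div (by positivity) (by positivity), Real.log_pow, Real.log_pow]
  rw [← hlog] at hαβ
  exact ⟨β, (Real.log_lt_log_iff hx hpos).mp hαβ.1,
    (Real.log_lt_log_iff hpos (hx.trans hxy)).mp hαβ.2⟩

lemma Ico_ceil_subset_Ico_inter_Ico {K L u v : ℕ} {ε : ℝ} (hε : 0 ≤ ε) (hεu : ε * u ≤ 1)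
    (hεv : ε * (v + 1 / 2) ≤ 1 / 2) (hlow : L * v ≤ K * u) (hupp : K * u ≤ L * (v + 1 / 2 : ℝ)) :
    Set.Ico (K * u) ⌈(1 + ε) * (K * u : ℕ)⌉₊ ⊆
      Set.Ico (K * u) (K * (u + 1)) ∩ Set.Ico (L * v) (L * (v + 1)) := by
  rintro n ⟨hn, hn'⟩
  rw [Nat.lt_ceil, Nat.cast_mul] at hn'
  have hnK : (n : ℝ) < K * (u + 1) := by
    calc (n : ℝ) < (1 + ε) * (K * u) := hn'
      _ = K * (u + ε * u) := by ring
      _ ≤ K * (u + 1) := by gcongr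
  have hnL : (n : ℝ) < L * (v + 1) := by
    calc (n : ℝ) < (1 + ε) * (K * u) := hn'
      _ ≤ (1 + ε) * (L * (v + 1 / 2)) := by gcongr
      _ = L * (v + 1 / 2 + ε * (v + 1 / 2)) := by ring
      _ ≤ L * (v + 1 / 2 + 1 / 2) := by gcongr
      _ = L * (v + 1) := by ring
  exact ⟨⟨hn, by exact_mod_cast hnK⟩, hlow.trans hn, by exact_mod_cast hnL⟩

lemma upperDensity_dvd_inter_prefix_pos {k l : ℕ} (hk : 1 < k) (hl : 1 < l) (h : MultIndep k l)
    {u v M : ℕ} (hu : 0 < u) (hv : 0 < v) (hM : 0 < M) :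
    0 < upperDensity
      ({n | M ∣ n} ∩ {n | kRepr k u <+: kRepr k n ∧ kRepr l v <+: kRepr l n}) := by
  obtain ⟨ε, hε, hεu, hεv⟩ : ∃ ε : ℝ, 0 < ε ∧ ε * u ≤ 1 ∧ ε * (v + 1 / 2) ≤ 1 / 2 := by
    refine ⟨1 / (u + (2 * v + 1)), by positivity, ?_, ?_⟩ <;> field_simp <;> linarith
  -- Only the first half of `[l ^ β * v, l ^ β * (v + 1))` is allowed to contain `k ^ α * u`, so
  -- that the two intervals overlap in an interval of length at least `ε * (k ^ α * u)`.
  have hratio : ∃ᶠ α : ℕ in atTop, ∃ β : ℕ,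
      (k : ℝ) ^ α / (l : ℝ) ^ β ∈ Set.Ioo ((v : ℝ) / u) ((v + 1 / 2) / u) :=
    h.frequently_exists_pow_div_pow_mem_Ioo hk hl (by positivity) (by gcongr; linarith)
  have hX : Tendsto (fun α => k ^ α * u) atTop atTop :=
    tendsto_atTop_mono (fun α => Nat.le_mul_of_pos_right _ hu)
      (tendsto_pow_atTop_atTop_of_one_lt hk)
  refine upperDensity_dvd_inter_pos hε (hX.frequently (hratio.mono ?_)) hM
  rintro α ⟨β, hlow, hupp⟩ n hn
  rw [div_lt_div_iff₀ (by positivity) (by positivity), mul_comm] at hlow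
  rw [div_lt_div_iff₀ (by positivity) (by positivity), mul_comm (_ + _)] at hupp
  obtain ⟨hnk, hnl⟩ := Ico_ceil_subset_Ico_inter_Ico hε.le hεu hεv
    (by exact_mod_cast hlow.le) (by exact_mod_cast hupp.le) hn
  exact ⟨kRepr_prefix_of_mem_Ico hk hu hnk, kRepr_prefix_of_mem_Ico hl hv hnl⟩

end LeadingDigits

theorem exists_states_positive_density_general {S S' Ω Ω' : Type*} {k l : ℕ} (hk : 1 < k)
    (hl : 1 < l) (hind : MultIndep k l) {δ : S → Fin k → S} {s₀ : S} {τ : S → Ω}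
    {δ' : S' → Fin l → S'} {s₀' : S'} {τ' : S' → Ω'} {z₀ : Fin k} (hz₀ : (z₀ : ℕ) = 0)
    {z₀' : Fin l} (hz₀' : (z₀' : ℕ) = 0) (hidem : ∀ s, δ (δ s z₀) z₀ = δ s z₀)
    (hidem' : ∀ s, δ' (δ' s z₀') z₀' = δ' s z₀') {a : ℕ → Ω} {b : ℕ → Ω'}
    (ha : ∀ n, a n = τ (run δ s₀ (kRepr k n))) (hb : ∀ n, b n = τ' (run δ' s₀' (kRepr l n)))
    {C : Set S} [Finite C] (hC : ∀ s ∈ C, ∀ d, δ s d ∈ C)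
    (hCacc : ∃ u, run δ s₀ (kRepr k u) ∈ C)
    {D : Set S'} [Finite D] (hD : ∀ s ∈ D, ∀ d, δ' s d ∈ D)
    (hDacc : ∃ v, run δ' s₀' (kRepr l v) ∈ D) :
    ∃ s ∈ C, ∃ r ∈ D, ∀ m : ℕ, 0 < upperDensity {n : ℕ | ∀ i < m,
      a (n + i) = τ (run δ s (kRepr k i)) ∧ b (n + i) = τ' (run δ' r (kRepr l i))} := by
  obtain ⟨u, hu, huC⟩ := exists_pos_run_kRepr_mem hk hC hCacc
  obtain ⟨v, hv, hvD⟩ := exists_pos_run_kRepr_mem hl hD hDacc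
  let Z (m : ℕ) (p : C × D) : Set ℕ := {n | ∀ i < m,
    a (n + i) = τ (run δ p.1 (kRepr k i)) ∧ b (n + i) = τ' (run δ' p.2 (kRepr l i))}
  have hZ_anti (p : C × D) : Antitone (Z · p) := fun m m' hm n hn i hi => hn i (hi.trans_le hm)
  have hZ_pos (m : ℕ) : ∃ p, 0 < upperDensity (Z m p) := by
    refine exists_upperDensity_pos_of_subset_iUnion (upperDensity_dvd_inter_prefix_pos hk hl hind
      hu hv (M := k ^ (m + 1) * l ^ (m + 1)) (by positivity)) ?_
    rintro n ⟨hdvd, hku, hlv⟩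
    have hn : 0 < n := pos_of_kRepr_prefix hk hu hku
    refine Set.mem_iUnion.mpr ⟨(⟨_, run_mem_of_prefix hC huC hku⟩,
      ⟨_, run_mem_of_prefix hD hvD hlv⟩), fun i hi => ⟨?_, ?_⟩⟩
    · rw [ha, run_kRepr_add_of_dvd hk hz₀ hidem s₀ hn (dvd_of_mul_right_dvd hdvd)
        (hi.trans (Nat.lt_pow_self hk))]
    · rw [hb, run_kRepr_add_of_dvd hl hz₀' hidem' s₀' hn (dvd_of_mul_left_dvd hdvd)
        (hi.trans (Nat.lt_pow_self hl))]
  obtain ⟨p, hp⟩ := frequently_exists.mp (Frequently.of_forall hZ_pos : ∃ᶠ m in atTop, _)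
  refine ⟨p.1, p.1.2, p.2, p.2.2, fun m => ?_⟩
  obtain ⟨m', hm, hpos⟩ := frequently_atTop.mp hp m
  exact hpos.trans_le (upperDensity_mono (hZ_anti p hm))

/-- Given idempotent automata `𝒜`, `ℬ` over multiplicatively independent bases `k`, `l`
which ignore leading `0`'s and have all states accessible, producing sequences `a`
and `b`, and strongly connected components `C` of `𝒜` and `D` of `ℬ`, there are
states `s ∈ C` and `r ∈ D` such that for every `m` the set `Z_m` of positions where
`a` and `b` simultaneously start a copy of the length-`m` prefixes of
`ã = a_{𝒜,s}` and `b̃ = a_{ℬ,r}` has positive upper density. -/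
theorem exists_states_positive_density {S S' Ω Ω' : Type}
    [Fintype S] [Fintype S'] [Fintype Ω] [Fintype Ω']
    (k l : ℕ) (hk : 2 ≤ k) (hl : 2 ≤ l) (hind : MultIndep k l)
    (δ : S → Fin k → S) (s₀ : S) (τ : S → Ω)
    (δ' : S' → Fin l → S') (s₀' : S') (τ' : S' → Ω')
    (z₀ : Fin k) (hz₀ : (z₀ : ℕ) = 0) (z₀' : Fin l) (hz₀' : (z₀' : ℕ) = 0)
    (hzero : δ s₀ z₀ = s₀) (hzero' : δ' s₀' z₀' = s₀')
    (hidem : ∀ s : S, δ (δ s z₀) z₀ = δ s z₀)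
    (hidem' : ∀ s : S', δ' (δ' s z₀') z₀' = δ' s z₀')
    (hacc : ∀ s : S, ∃ w : List (Fin k), run δ s₀ w = s)
    (hacc' : ∀ s : S', ∃ w : List (Fin l), run δ' s₀' w = s)
    (a : ℕ → Ω) (b : ℕ → Ω')
    (ha : ∀ n : ℕ, a n = τ (run δ s₀ (kRepr k n)))
    (hb : ∀ n : ℕ, b n = τ' (run δ' s₀' (kRepr l n)))
    (C : Set S) (hC : IsSCC δ C) (D : Set S') (hD : IsSCC δ' D) :
    ∃ s ∈ C, ∃ r ∈ D, ∀ m : ℕ,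
      0 < upperDensity {n : ℕ | ∀ i < m,
        a (n + i) = τ (run δ s (kRepr k i)) ∧
        b (n + i) = τ' (run δ' r (kRepr l i))} := by
  exact exists_states_positive_density_general hk hl hind hz₀ hz₀' hidem hidem' ha hb
    hC.2.1 (hC.exists_run_kRepr_mem hk hz₀ hzero hacc)
    hD.2.1 (hD.exists_run_kRepr_mem hl hz₀' hzero' hacc')
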